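/- For a real function f with Fourier transform f̂, ∑_{λ=1,2} ∫∫ |f̂(l)|² [G^λ(k)·l]² / (|k|² + |k|) dk dl = C₃‖∇f‖², where C₃ = (2/(3π))·ln(1+Λ); indeed, ∑_λ [ε_λ(k)·l]² = |l|² − (k̂·l)², whose angular average is (2/3)|l|², so that C₃ = (2/3)(2π)⁻²·4π∫₀^Λ r/(r²+r) dr. -/

import Mathlib

open MeasureTheory Real
open scoped RealInnerProductSpace

local notation "E³" => EuclideanSpace ℝ (Fin 3)

/-- radial weight with cutoff -/
noncomputable def opWeight (Λ : ℝ) : ℝ → ℝ :=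
  Set.indicator (Set.Iic Λ) (fun r => ((2 * π) ^ 2 * r)⁻¹ / (r ^ 2 + r))

lemma opWeight_radial (Λ r : ℝ) (hr : 0 < r) :
    r ^ 2 * opWeight Λ r
      = Set.indicator (Set.Iic Λ) (fun r => ((2 * π) ^ 2)⁻¹ * (1 + r)⁻¹) r := by
  unfold opWeight
  by_cases h : r ∈ Set.Iic Λ
  · rw [Set.indicator_of_mem h, Set.indicator_of_mem h]
    have : (1 + r) ≠ 0 := by positivity
    have : r ^ 2 + r ≠ 0 := by positivity
    field_simp
    ring
  · rw [Set.indicator_of_notMem h, Set.indicator_of_notMem h, mul_zero]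

lemma opWeight_integrable (Λ : ℝ) (hΛ : 0 < Λ) :
    Integrable (fun k : E³ => opWeight Λ ‖k‖) := by
  rw [integrable_fun_norm_addHaar (volume : Measure E³) (f := opWeight Λ)]
  have hd : Module.finrank ℝ E³ - 1 = 2 := by simp
  rw [hd]
  refine IntegrableOn.congr_fun (f := Set.indicator (Set.Iic Λ)
    (fun r => ((2 * π) ^ 2)⁻¹ * (1 + r)⁻¹)) ?_ ?_ measurableSet_Ioi
  · rw [IntegrableOn, integrable_indicator_iff measurableSet_Iic, IntegrableOn,
      Measure.restrict_restrict measurableSet_Iic, Set.inter_comm, Set.Ioi_inter_Iic,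
      ← IntegrableOn]
    refine (ContinuousOn.integrableOn_Icc ?_).mono_set Set.Ioc_subset_Icc_self
    refine continuousOn_const.mul (ContinuousOn.inv₀ (by fun_prop) ?_)
    intro x hx
    have := hx.1
    positivity
  · intro r hr
    exact (opWeight_radial Λ r hr).symm

lemma opWeight_integral (Λ : ℝ) (hΛ : 0 < Λ) :
    ∫ k : E³, opWeight Λ ‖k‖ = π⁻¹ * Real.log (1 + Λ) := by
  rw [integral_fun_norm_addHaar (volume : Measure E³) (opWeight Λ)]
  have hd : Module.finrank ℝ E³ = 3 := by simp
  have h1 : ∫ y in Set.Ioi (0 : ℝ), y ^ 2 • opWeight Λ y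
      = ((2 * π) ^ 2)⁻¹ * Real.log (1 + Λ) := by
    simp only [smul_eq_mul]
    rw [setIntegral_congr_fun measurableSet_Ioi
      (g := Set.indicator (Set.Iic Λ) (fun r => ((2 * π) ^ 2)⁻¹ * (1 + r)⁻¹))
      (fun r hr => opWeight_radial Λ r hr), integral_indicator measurableSet_Iic,
      Measure.restrict_restrict measurableSet_Iic, Set.inter_comm, Set.Ioi_inter_Iic,
      integral_const_mul, ← intervalIntegral.integral_of_le hΛ.le,
      intervalIntegral.integral_comp_add_left (fun x => x⁻¹) 1,
      integral_inv_of_pos (by norm_num) (by linarith)]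
    simp
  have hv : (volume : Measure E³).real (Metric.ball 0 1) = π * 4 / 3 := by
    rw [Measure.real, EuclideanSpace.volume_ball_fin_three]
    simp only [ENNReal.ofReal_one, one_pow, one_mul]
    exact ENNReal.toReal_ofReal (by positivity)
  rw [hd, hv, show 3 - 1 = 2 from rfl, h1]
  simp only [nsmul_eq_mul, smul_eq_mul]
  push_cast
  field_simp
  ring

lemma opJ_integrable (Λ : ℝ) (hΛ : 0 < Λ) (l : E³) :
    Integrable (fun k : E³ => opWeight Λ ‖k‖ * (⟪k, l⟫ / ‖k‖) ^ 2) := by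
  refine (opWeight_integrable Λ hΛ).mul_bdd (c := ‖l‖ ^ 2) ?_ ?_
  · exact Measurable.aestronglyMeasurable (by fun_prop)
  · refine Filter.Eventually.of_forall fun k => ?_
    rw [norm_pow, norm_div, norm_norm]
    refine pow_le_pow_left₀ (by positivity) ?_ 2
    refine div_le_of_le_mul₀ (norm_nonneg _) (norm_nonneg _) ?_
    rw [mul_comm]
    exact norm_inner_le_norm k l

lemma opJ_congr (h : ℝ → ℝ) (v w : E³) (hvw : ‖v‖ = ‖w‖) :
    ∫ k : E³, h ‖k‖ * (⟪k, v⟫ / ‖k‖) ^ 2 = ∫ k : E³, h ‖k‖ * (⟪k, w⟫ / ‖k‖) ^ 2 := by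
  let R : E³ ≃ₗᵢ[ℝ] E³ := Submodule.reflection (Submodule.span ℝ {v - w})ᗮ
  have hR : R v = w := Submodule.reflection_sub hvw
  rw [← R.measurePreserving.integral_comp R.toHomeomorph.measurableEmbedding
    (fun k : E³ => h ‖k‖ * (⟪k, w⟫ / ‖k‖) ^ 2)]
  refine integral_congr_ae (Filter.Eventually.of_forall fun k => ?_)
  simp only [← hR, LinearIsometryEquiv.norm_map, LinearIsometryEquiv.inner_map_map]

lemma opJ_value (Λ : ℝ) (hΛ : 0 < Λ) (l : E³) :
    ∫ k : E³, opWeight Λ ‖k‖ * (⟪k, l⟫ / ‖k‖) ^ 2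
      = ‖l‖ ^ 2 / 3 * (π⁻¹ * Real.log (1 + Λ)) := by
  have key : ∀ i : Fin 3, ∫ k : E³, opWeight Λ ‖k‖ * (⟪k, l⟫ / ‖k‖) ^ 2
      = ∫ k : E³, opWeight Λ ‖k‖ * (⟪k, ‖l‖ • EuclideanSpace.basisFun (Fin 3) ℝ i⟫ / ‖k‖) ^ 2 := by
    intro i
    apply opJ_congr
    rw [norm_smul, OrthonormalBasis.norm_eq_one]
    simp
  have hs : ∑ i : Fin 3, ∫ k : E³, opWeight Λ ‖k‖ *
      (⟪k, ‖l‖ • EuclideanSpace.basisFun (Fin 3) ℝ i⟫ / ‖k‖) ^ 2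
      = ‖l‖ ^ 2 * (π⁻¹ * Real.log (1 + Λ)) := by
    rw [← integral_finsetSum _ (fun i _ => opJ_integrable Λ hΛ _), ← opWeight_integral Λ hΛ,
      ← integral_const_mul]
    refine integral_congr_ae ?_
    have h0 : ∀ᵐ k : E³, k ≠ 0 := by
      simp [ae_iff, measure_singleton]
    filter_upwards [h0] with k hk
    have hk' : ‖k‖ ≠ 0 := norm_ne_zero_iff.mpr hk
    have hb := (EuclideanSpace.basisFun (Fin 3) ℝ).sum_sq_norm_inner_left k
    simp only [Real.norm_eq_abs, sq_abs] at hb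
    simp only [inner_smul_right, div_pow, mul_pow]
    rw [← Finset.mul_sum, ← Finset.sum_div, ← Finset.mul_sum, hb]
    field_simp
  rw [← Finset.sum_congr rfl (fun i _ => key i)] at hs
  simp only [Finset.sum_const, Finset.card_univ, Fintype.card_fin, nsmul_eq_mul] at hs
  push_cast at hs
  linarith

/-- The explicit one-photon integral: with form factor
`G^λ(k) = χ(|k| ≤ Λ)(2π|k|^{1/2})⁻¹ε_λ(k)` and polarization sum
`∑_λ (ε_λ(k)·l)² = |l|² − (k̂·l)²`, for any nonnegative weight `F = |f̂|²`,
`∫∫_{|k|≤Λ} F(l)(|l|² − (k̂·l)²)((2π)²|k|)⁻¹/(|k|²+|k|) dk dl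
  = (2/(3π))·ln(1+Λ)·∫ |l|²F(l) dl  (= C₃‖∇f‖²)`. -/
theorem one_photon_integral (Λ : ℝ) (hΛ : 0 < Λ) (F : E³ → ℝ)
    (hF : ∀ l, 0 ≤ F l) (hFmeas : Measurable F)
    (hFi : Integrable (fun l : E³ => ‖l‖ ^ 2 * F l)) :
    ∫ l : E³, ∫ k in Metric.closedBall (0 : E³) Λ,
        F l * (‖l‖ ^ 2 - (⟪k, l⟫ / ‖k‖) ^ 2) * ((2 * π) ^ 2 * ‖k‖)⁻¹ /
          (‖k‖ ^ 2 + ‖k‖) =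
      2 / (3 * π) * Real.log (1 + Λ) * ∫ l : E³, ‖l‖ ^ 2 * F l := by
  rw [← integral_const_mul]
  refine integral_congr_ae (Filter.Eventually.of_forall fun l => ?_)
  have e : ∀ k : E³, (Metric.closedBall (0 : E³) Λ).indicator (fun k : E³ =>
      F l * (‖l‖ ^ 2 - (⟪k, l⟫ / ‖k‖) ^ 2) * ((2 * π) ^ 2 * ‖k‖)⁻¹ /
          (‖k‖ ^ 2 + ‖k‖)) k
      = F l * (‖l‖ ^ 2 * opWeight Λ ‖k‖ - opWeight Λ ‖k‖ * (⟪k, l⟫ / ‖k‖) ^ 2) := by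
    intro k
    unfold opWeight
    by_cases h : ‖k‖ ≤ Λ
    · rw [Set.indicator_of_mem (by simpa using h),
        Set.indicator_of_mem (show ‖k‖ ∈ Set.Iic Λ from h)]
      ring
    · rw [Set.indicator_of_notMem (by simpa using h),
        Set.indicator_of_notMem (show ‖k‖ ∉ Set.Iic Λ from h)]
      ring
  have e2 := integral_congr_ae (μ := (volume : Measure E³)) (Filter.Eventually.of_forall e)
  rw [integral_indicator Metric.isClosed_closedBall.measurableSet] at e2
  refine e2.trans ?_
  rw [integral_const_mul, integral_sub ((opWeight_integrable Λ hΛ).const_mul _)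
    (opJ_integrable Λ hΛ l), integral_const_mul, opJ_value Λ hΛ, opWeight_integral Λ hΛ]
  field_simp
  ring
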